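/- Let N ≥ 1 and B ≥ 0 be integers, let t_1,…,t_N and y_1,…,y_{2N} be integers with |t_i| ≤ B and |y_j| ≤ B for all i, j, and let C be an integer with C ≥ 3B. Define the (2N+1)-dimensional vectors u = (C, t_1,…,t_N, C,…,C) (with N trailing copies of C) and v = (C, y_1,…,y_{2N}), indexed from 0. Then for every k with 1 ≤ k ≤ N, the (min,+)-convolution satisfies (u ∗ v)_{N+k} = min_{1 ≤ i ≤ N} (t_i + y_{N+k−i}). -/

import Mathlib

/-- The `(min,+)`-convolution of two vectors of length `m` (entries indexed by
`0,…,m−1`), valued in `WithTop ℤ`: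
`(u∗v)_k = min_{0 ≤ i,j ≤ m−1, i+j=k} (u_i + v_j)`
(the minimum over the empty set being `⊤`, which does not occur for
`0 ≤ k ≤ 2m−2`). -/
def minPlusConv (m : ℕ) (u v : ℕ → ℤ) (k : ℕ) : WithTop ℤ :=
  (((Finset.range m) ×ˢ (Finset.range m)).filter (fun p => p.1 + p.2 = k)).inf
    (fun p => ((u p.1 + v p.2 : ℤ) : WithTop ℤ))

/-- For `u = (C, t_1,…,t_N, C,…,C)` and `v = (C, y_1,…,y_{2N})`
of dimension `2N+1` (indexed from `0`), with `|t_i| ≤ B`, `|y_j| ≤ B`, and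
`C ≥ 3B`, the `(min,+)`-convolution satisfies
`(u ∗ v)_{N+k} = min_{1 ≤ i ≤ N} (t_i + y_{N+k−i})` for all `1 ≤ k ≤ N`. -/
theorem stmt_8 (N : ℕ) (hN : 1 ≤ N) (B C : ℤ) (hB : 0 ≤ B) (hC : 3 * B ≤ C)
    (t y : ℕ → ℤ)
    (ht : ∀ i, 1 ≤ i → i ≤ N → |t i| ≤ B)
    (hy : ∀ j, 1 ≤ j → j ≤ 2 * N → |y j| ≤ B)
    (u v : ℕ → ℤ)
    (hu0 : u 0 = C)
    (hu1 : ∀ i, 1 ≤ i → i ≤ N → u i = t i)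
    (hu2 : ∀ i, N + 1 ≤ i → i ≤ 2 * N → u i = C)
    (hv0 : v 0 = C)
    (hv1 : ∀ j, 1 ≤ j → j ≤ 2 * N → v j = y j) :
    ∀ k, 1 ≤ k → k ≤ N →
      minPlusConv (2 * N + 1) u v (N + k)
        = ((Finset.Icc 1 N).inf' (Finset.nonempty_Icc.mpr hN)
            (fun i => t i + y (N + k - i)) : ℤ) := by
  intro k hk1 hkN
  unfold minPlusConv
  apply le_antisymm
  · obtain ⟨i, hi, he⟩ := Finset.exists_mem_eq_inf' (Finset.nonempty_Icc.mpr hN)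
      (fun i => t i + y (N + k - i))
    rw [he]
    rw [Finset.mem_Icc] at hi
    have hm : (i, N + k - i) ∈ ((Finset.range (2 * N + 1)) ×ˢ
        (Finset.range (2 * N + 1))).filter (fun p => p.1 + p.2 = N + k) := by
      simp only [Finset.mem_filter, Finset.mem_product, Finset.mem_range]
      omega
    refine (Finset.inf_le hm).trans (le_of_eq ?_)
    simp only
    rw [hu1 i hi.1 hi.2, hv1 (N + k - i) (by omega) (by omega)]
  · apply Finset.le_inf
    rintro ⟨i, j⟩ hp
    simp only [Finset.mem_filter, Finset.mem_product, Finset.mem_range] at hp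
    obtain ⟨⟨hi, hj⟩, hij⟩ := hp
    rw [WithTop.coe_le_coe]
    by_cases h : 1 ≤ i ∧ i ≤ N
    · have hle := Finset.inf'_le (fun i => t i + y (N + k - i)) (Finset.mem_Icc.mpr h)
      have hj' : N + k - i = j := by omega
      simp only [hj'] at hle
      rw [hu1 i h.1 h.2, hv1 j (by omega) (by omega)]
      exact hle
    · have hle := Finset.inf'_le (fun i => t i + y (N + k - i))
        (Finset.mem_Icc.mpr ⟨le_refl 1, hN⟩)
      refine hle.trans ?_
      have hu : u i = C := by
        rcases Nat.eq_zero_or_pos i with h0 | h0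
        · rw [h0, hu0]
        · exact hu2 i (by omega) (by omega)
      have hv : -B ≤ v j := by
        rcases Nat.eq_zero_or_pos j with h0 | h0
        · rw [h0, hv0]; linarith
        · rw [hv1 j h0 (by omega)]
          exact (abs_le.mp (hy j h0 (by omega))).1
      have h1 := (abs_le.mp (ht 1 le_rfl hN)).2
      have h2 := (abs_le.mp (hy (N + k - 1) (by omega) (by omega))).2
      simp only
      rw [hu]
      linarith
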